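/- Let A be a Hopf algebra over ℂ (not necessarily finite-dimensional) with a triangular structure R and Drinfeld element u. Then for every finite-dimensional A-module V, the trace of the action of u on V is an integer: tr(u|_V) ∈ ℤ. -/

import Mathlib

/-!
The scalar `d = tr (u|_V)` is the dimension of `V` in the symmetric tensor category of
representations of `(A, R)`. The symmetric group acts on `V^{⊗n}` through the braiding, and
`φ(g) = tr (u^{⊗n} g)` is a trace with the Markov property: `d * φ((a b) h) = φ(h)` if `h` fixes
`a` and `b ≠ a`. Hence the element `∑ φ(g) g⁻¹` of the group algebra is `d ^ n` times the product
of the factors `1 + d⁻¹ J`, where `J` runs over the Jucys–Murphy elements. The spectrum of these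
consists of integers, so if `d` is not an integer the product is invertible, the trace form of `φ`
is nondegenerate, and the group algebra acts faithfully on `V^{⊗n}`. This gives
`n! ≤ (dim V) ^ (2n)` for all `n ≥ 2`, which is absurd.
-/

open TensorProduct

section Defs
variable (k A : Type*) [CommRing k] [Ring A] [HopfAlgebra k A]

/-- The map sending `R ∈ A⊗A` to `R₁₃ ∈ A⊗A⊗A`. -/
noncomputable def R13map : A ⊗[k] A →ₗ[k] A ⊗[k] (A ⊗[k] A) :=
  TensorProduct.map LinearMap.id (TensorProduct.mk k A A 1)

/-- The map sending `R ∈ A⊗A` to `R₁₂ ∈ A⊗A⊗A`. -/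
noncomputable def R12map : A ⊗[k] A →ₗ[k] A ⊗[k] (A ⊗[k] A) :=
  TensorProduct.map LinearMap.id ((TensorProduct.mk k A A).flip 1)

/-- `R` is a quasitriangular structure on the Hopf algebra `A`: `R` is invertible,
`(Δ⊗id)(R) = R₁₃R₂₃`, `(id⊗Δ)(R) = R₁₃R₁₂` and `τ(Δ(a))·R = R·Δ(a)` for all `a`. -/
noncomputable def IsQuasitriangular (R : A ⊗[k] A) : Prop :=
  IsUnit R ∧
  (TensorProduct.assoc k A A A) ((LinearMap.rTensor A (Coalgebra.comul (R := k))) R)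
      = R13map k A R * ((1 : A) ⊗ₜ R) ∧
  (LinearMap.lTensor A (Coalgebra.comul (R := k))) R = R13map k A R * R12map k A R ∧
  ∀ a : A, (TensorProduct.comm k A A) (Coalgebra.comul (R := k) a) * R
      = R * Coalgebra.comul (R := k) a

/-- `R` is a triangular structure on the Hopf algebra `A`: it is quasitriangular
and `R·τ(R) = 1⊗1`. -/
noncomputable def IsTriangular (R : A ⊗[k] A) : Prop :=
  IsQuasitriangular k A R ∧ R * (TensorProduct.comm k A A) R = 1

/-- The Drinfeld element `u = μ∘(S⊗id)(τ(R))` of a quasitriangular Hopf algebra. -/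
noncomputable def drinfeld (R : A ⊗[k] A) : A :=
  LinearMap.mul' k A
    ((TensorProduct.map (HopfAlgebra.antipode (R := k)) LinearMap.id)
      ((TensorProduct.comm k A A) R))

end Defs

/-- The `ℂ`-linear endomorphism of a module given by the action of an element `u ∈ A`. -/
noncomputable def smulLinearMap (A : Type*) [Ring A] [Algebra ℂ A] (u : A)
    (V : Type*) [AddCommGroup V] [Module ℂ V] [Module A V] [IsScalarTower ℂ A V] :
    V →ₗ[ℂ] V where
  toFun v := u • v
  map_add' := smul_add u
  map_smul' c v := by
    show u • c • v = c • (u • v)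
    rw [← algebraMap_smul A c v, ← algebraMap_smul A c (u • v), smul_smul, smul_smul,
      Algebra.commutes]

section IntegerSplit

open Polynomial

variable {B : Type*} [Ring B]

/-- The value at `x` of the monic polynomial whose roots are the integers in `l`. -/
def prodSubInt (l : List ℤ) (x : B) : B :=
  (l.map fun m : ℤ ↦ x - (m : B)).prod

theorem prodSubInt_cons (m : ℤ) (l : List ℤ) (x : B) :
    prodSubInt (m :: l) x = (x - m) * prodSubInt l x := by
  rw [prodSubInt, List.map_cons, List.prod_cons, prodSubInt]

theorem prodSubInt_append (l l' : List ℤ) (x : B) :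
    prodSubInt (l ++ l') x = prodSubInt l x * prodSubInt l' x := by
  rw [prodSubInt, List.map_append, List.prod_append, prodSubInt, prodSubInt]

theorem commute_prodSubInt {x y : B} (hxy : Commute x y) (l : List ℤ) :
    Commute x (prodSubInt l y) :=
  Commute.list_prod_right _ _ <| by
    simpa using fun m _ ↦ hxy.sub_right (Int.commute_cast x m)

/-- `x` is annihilated by a product of integral linear factors, so that in an algebra over a field
its spectrum consists of integers. -/
def IsIntegerSplit (x : B) : Prop :=
  ∃ l : List ℤ, prodSubInt l x = 0

theorem isIntegerSplit_zero : IsIntegerSplit (0 : B) :=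
  ⟨[0], by simp [prodSubInt]⟩

theorem IsIntegerSplit.isUnit_algebraMap_add {K : Type*} [Field K] [Algebra K B] {x : B}
    (hx : IsIntegerSplit x) {d : K} (hd : ∀ n : ℤ, d ≠ n) : IsUnit (algebraMap K B d + x) := by
  obtain ⟨l, hl⟩ := hx
  let p : K[X] := prodSubInt l X
  have hpx : aeval x p = 0 := by
    simpa [p, prodSubInt, map_list_prod, Function.comp_def] using hl
  have hpd : eval (-d) p ≠ 0 := by
    simp only [p, prodSubInt, eval_list_prod, List.map_map, Function.comp_def, eval_sub, eval_X,
      eval_intCast, ne_eq, List.prod_eq_zero_iff, List.mem_map, not_exists, not_and]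
    exact fun m _ h ↦ hd (-m) (by push_cast; linear_combination -h)
  by_contra hunit
  have hmem : -d ∈ spectrum K x := by
    rwa [spectrum.mem_iff, map_neg, ← neg_add', IsUnit.neg_iff]
  refine spectrum.subset_polynomial_aeval x p ⟨-d, hmem, rfl⟩ ?_
  simp only [hpx, spectrum.mem_resolventSet_iff, sub_zero]
  exact (IsUnit.mk0 _ hpd).map (algebraMap K B)

theorem sub_mul_prodSubInt_mul_sub {s x y : B} (hxy : Commute x y) (hys : y * s = s * x + 1)
    (l : List ℤ) : (y - x) * (prodSubInt l y * s - s * prodSubInt l x)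
      = prodSubInt l y - prodSubInt l x := by
  induction l with
  | nil => simp [prodSubInt]
  | cons m l ih =>
    simp only [prodSubInt_cons]
    have hm (z : B) : (m : B) * z = z * m := Int.cast_commute m z
    have hsx : s * (x - m) = (y - m) * s - 1 := by
      linear_combination (norm := noncomm_ring) -hys + hm s
    have hcomm : (y - x) * (y - m) = (y - m) * (y - x) := by
      linear_combination (norm := noncomm_ring) hm (y - x) - hxy.eq
    linear_combination (norm := noncomm_ring)
      (y - m) * ih + hcomm * (prodSubInt l y * s - s * prodSubInt l x)
        - (y - x) * hsx * prodSubInt l x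

theorem mul_prodSubInt_eq_zero {e x y : B} (hxy : Commute x y) (l : List ℤ)
    (he : e * ((y - x) ^ 2 - 1) = 0) (hx : e * prodSubInt l x = 0) :
    e * prodSubInt (l.flatMap fun m ↦ [m + 1, m - 1]) y = 0 := by
  induction l generalizing e with
  | nil => exact hx
  | cons m l ih =>
    have hm (z : B) : Commute (m : B) z := Int.cast_commute m z
    have hfactor : e * (y - (m + 1)) * (y - (m - 1)) = e * (x - m) * (2 * y - x - m) := by
      linear_combination (norm := noncomm_ring) he - e * ((hm x).eq - (hm y).eq + hxy.eq)
    have hcomm : Commute (x - m) ((y - x) ^ 2 - 1) :=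
      (((hxy.sub_right (.refl x)).sub_left (hm _)).pow_right 2).sub_right (.one_right _)
    have he' : e * (x - m) * ((y - x) ^ 2 - 1) = 0 := by
      rw [mul_assoc, hcomm.eq, ← mul_assoc, he, zero_mul]
    have hy := ih he' (by rw [mul_assoc, ← prodSubInt_cons, hx])
    rw [List.flatMap_cons, prodSubInt_append, prodSubInt_cons, prodSubInt_cons]
    set q := prodSubInt (l.flatMap fun m ↦ [m + 1, m - 1]) y
    have hcomm' : Commute (2 * y - x - m) q :=
      (((Commute.ofNat_left 2 q).mul_left (commute_prodSubInt (.refl y) _)).sub_left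
        (commute_prodSubInt hxy _)).sub_left (hm q)
    push_cast
    calc e * ((y - (m + 1)) * ((y - (m - 1)) * 1) * q)
        = e * (x - m) * ((2 * y - x - m) * q) := by
          linear_combination (norm := noncomm_ring) hfactor * q
      _ = 0 := by rw [hcomm'.eq, ← mul_assoc, hy, zero_mul]

/-- Together with `x * y = y * x` and `s * s = 1`, the formula `y = s * x * s + s` is the
presentation of the degenerate affine Hecke algebra of rank two. -/
theorem IsIntegerSplit.mul_mul_add {s x : B} (hx : IsIntegerSplit x) (hs : s * s = 1)
    (hxy : Commute x (s * x * s + s)) : IsIntegerSplit (s * x * s + s) := by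
  obtain ⟨l, hl⟩ := hx
  generalize hy : s * x * s + s = y at hxy ⊢
  have hys : y * s = s * x + 1 := by
    linear_combination (norm := noncomm_ring) (s * x + 1) * hs - hy * s
  have hsy : s * y = x * s + 1 := by
    linear_combination (norm := noncomm_ring) hs * (x * s + 1) - s * hy
  have hdiff := sub_mul_prodSubInt_mul_sub hxy hys l
  have hpx := (commute_prodSubInt hxy l).eq
  have hpy := (commute_prodSubInt (.refl y) l).eq
  rw [hl, mul_zero, sub_zero, sub_zero] at hdiff
  have hps : prodSubInt l y * (y - x) = prodSubInt l y * s := by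
    linear_combination (norm := noncomm_ring)
      hdiff * s - (y - x) * prodSubInt l y * hs - hpy + hpx
  have hsq : prodSubInt l y * ((y - x) ^ 2 - 1) = 0 := by
    linear_combination (norm := noncomm_ring)
      hps * (y - x) - hps * s + prodSubInt l y * (hsy + hys - hs)
  refine ⟨l ++ l.flatMap fun m ↦ [m + 1, m - 1], ?_⟩
  rw [prodSubInt_append]
  exact mul_prodSubInt_eq_zero hxy l hsq (by rw [hl, mul_zero])

end IntegerSplit

open Equiv (Perm swap)

section JucysMurphy

variable {α B : Type*} [DecidableEq α]

/-- The Jucys–Murphy element `∑ b ∈ s, (a b)` of a representation `ρ` of the symmetric group. -/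
def jucysMurphy [Semiring B] (ρ : Perm α →* B) (s : Finset α) (a : α) : B :=
  ∑ b ∈ s, ρ (swap a b)

theorem commute_jucysMurphy [Semiring B] (ρ : Perm α →* B) {s : Finset α} {a : α} {σ : Perm α}
    (ha : σ a = a) (hs : ∀ b, b ∈ s ↔ σ b ∈ s) : Commute (ρ σ) (jucysMurphy ρ s a) := by
  rw [Commute, SemiconjBy, jucysMurphy, Finset.mul_sum, Finset.sum_mul]
  refine Finset.sum_equiv σ hs fun b _ ↦ ?_
  rw [← map_mul, ← map_mul, Equiv.mul_swap_eq_swap_mul, ha]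

theorem jucysMurphy_insert [Semiring B] (ρ : Perm α →* B) {s : Finset α} {a c : α} (hc : c ∉ s)
    (ha : a ∉ insert c s) : jucysMurphy ρ (insert c s) a
      = ρ (swap a c) * jucysMurphy ρ s c * ρ (swap a c) + ρ (swap a c) := by
  rw [jucysMurphy, Finset.sum_insert hc, add_comm, jucysMurphy, Finset.mul_sum, Finset.sum_mul]
  congr 1
  refine Finset.sum_congr rfl fun b hb ↦ ?_
  have hba : b ≠ a := fun h ↦ ha (h ▸ Finset.mem_insert_of_mem hb)
  have hbc : b ≠ c := fun h ↦ hc (h ▸ hb)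
  rw [← map_mul, ← map_mul, Equiv.mul_swap_eq_swap_mul (swap a c), Equiv.swap_apply_right,
    Equiv.swap_apply_of_ne_of_ne hba hbc, mul_assoc, Equiv.swap_mul_self, mul_one]

theorem isIntegerSplit_jucysMurphy [Ring B] (ρ : Perm α →* B) {s : Finset α} {a : α}
    (ha : a ∉ s) : IsIntegerSplit (jucysMurphy ρ s a) := by
  induction s using Finset.induction_on generalizing a with
  | empty => simpa [jucysMurphy] using isIntegerSplit_zero
  | insert c s hc ih =>
    have hcomm : Commute (jucysMurphy ρ s c) (jucysMurphy ρ (insert c s) a) := by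
      refine Commute.sum_left _ _ _ fun b hb ↦ commute_jucysMurphy ρ ?_ fun e ↦ ?_
      · exact Equiv.swap_apply_of_ne_of_ne (fun h ↦ ha (h ▸ Finset.mem_insert_self c s))
          fun h ↦ ha (h ▸ Finset.mem_insert_of_mem hb)
      · rcases eq_or_ne e c with rfl | hec
        · simp [hb]
        rcases eq_or_ne e b with rfl | heb
        · simp [hb]
        rw [Equiv.swap_apply_of_ne_of_ne hec heb]
    rw [jucysMurphy_insert ρ hc ha] at hcomm ⊢
    exact (ih hc).mul_mul_add (by rw [← map_mul, Equiv.swap_mul_self, map_one]) hcomm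

end JucysMurphy

section Gram

variable {K α B : Type*} [DecidableEq α]

theorem apply_eq_of_mem_permsOfFinset {s : Finset α} {a : α} {h : Perm α}
    (hh : h ∈ permsOfFinset s) (ha : a ∉ s) : h a = a :=
  not_not.mp fun hne ↦ ha (mem_perms_of_finset_iff.mp hh hne)

theorem sum_permsOfFinset_insert {M : Type*} [AddCommMonoid M] (F : Perm α → M) {s : Finset α}
    {a : α} (ha : a ∉ s) :
    ∑ g ∈ permsOfFinset (insert a s), F g
      = ∑ h ∈ permsOfFinset s, ∑ b ∈ insert a s, F (swap a b * h) := by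
  rw [← Finset.sum_product']
  refine (Finset.sum_nbij' (fun p ↦ swap a p.2 * p.1) (fun g ↦ (swap a (g a) * g, g a))
    ?_ ?_ ?_ (fun g _ ↦ by simp) (fun _ _ ↦ rfl)).symm
  · rintro ⟨h, b⟩ hp
    obtain ⟨hh, hb⟩ := Finset.mem_product.mp hp
    refine mem_perms_of_finset_iff.mpr fun {x} hx ↦ ?_
    by_contra hxs
    have hxa : x ≠ a := fun h ↦ hxs (h ▸ Finset.mem_insert_self a s)
    have hxb : x ≠ b := fun h ↦ hxs (h ▸ hb)
    refine hx ?_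
    rw [Equiv.Perm.mul_apply,
      apply_eq_of_mem_permsOfFinset hh (hxs ∘ Finset.mem_insert_of_mem),
      Equiv.swap_apply_of_ne_of_ne hxa hxb]
  · intro g hg
    rw [mem_perms_of_finset_iff] at hg
    refine Finset.mem_product.mpr ⟨mem_perms_of_finset_iff.mpr fun {x} hx ↦ ?_, ?_⟩
    · have hxa : x ≠ a := by rintro rfl; simp at hx
      have hgx : g x ≠ x := fun h ↦ hx <| by
        rw [Equiv.Perm.mul_apply, h, Equiv.swap_apply_of_ne_of_ne hxa]
        exact fun h' ↦ hxa (g.injective (h.trans h'))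
      exact (Finset.mem_insert.mp (hg hgx)).resolve_left hxa
    · rcases eq_or_ne (g a) a with h | h
      · simp [h]
      · exact hg (g.injective.ne h)
  · rintro ⟨h, b⟩ hp
    simp [apply_eq_of_mem_permsOfFinset (Finset.mem_product.mp hp).1 ha]

variable [Ring B]

/-- The element `∑ f(g) g⁻¹`, over the permutations `g` of `s`. When `f` is a trace on the
symmetric group, its invertibility means that the form `(g, h) ↦ f (g⁻¹ * h)` is nondegenerate. -/
def gramElement [Semiring K] [Module K B] (ρ : Perm α →* B) (f : Perm α → K) (s : Finset α) : B :=
  ∑ g ∈ permsOfFinset s, f g • ρ g⁻¹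

variable [Field K] [Algebra K B] (ρ : Perm α →* B) {f : Perm α → K} {d : K}

theorem gramElement_insert (hd : d ≠ 0)
    (hf : ∀ a b h, a ≠ b → h a = a → d * f (swap a b * h) = f h) {s : Finset α} {a : α}
    (ha : a ∉ s) :
    gramElement ρ f (insert a s) = gramElement ρ f s * (1 + d⁻¹ • jucysMurphy ρ s a) := by
  rw [gramElement, sum_permsOfFinset_insert _ ha, gramElement, Finset.sum_mul]
  refine Finset.sum_congr rfl fun h hh ↦ ?_
  rw [Finset.sum_insert ha, Equiv.swap_self, ← Equiv.Perm.one_def, one_mul, mul_add, mul_one,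
    jucysMurphy, mul_smul_comm, smul_mul_assoc, Finset.mul_sum, Finset.smul_sum, Finset.smul_sum]
  congr 1
  refine Finset.sum_congr rfl fun b hb ↦ ?_
  have hab : a ≠ b := fun h ↦ ha (h ▸ hb)
  rw [mul_inv_rev, Equiv.swap_inv, map_mul, smul_smul,
    ← hf a b h hab (apply_eq_of_mem_permsOfFinset hh ha), inv_mul_cancel_left₀ hd]

theorem isUnit_gramElement (hd : ∀ n : ℤ, d ≠ n)
    (hf : ∀ a b h, a ≠ b → h a = a → d * f (swap a b * h) = f h) (hf1 : f 1 ≠ 0) (s : Finset α) :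
    IsUnit (gramElement ρ f s) := by
  have hd0 : d ≠ 0 := by simpa using hd 0
  induction s using Finset.induction_on with
  | empty =>
    have : gramElement ρ f ∅ = algebraMap K B (f 1) := by
      rw [gramElement, show permsOfFinset (∅ : Finset α) = {1} by rfl]
      simp [Algebra.algebraMap_eq_smul_one]
    exact this ▸ (IsUnit.mk0 _ hf1).map (algebraMap K B)
  | insert a s ha ih =>
    rw [gramElement_insert ρ hd0 hf ha]
    refine ih.mul ?_
    have h : 1 + d⁻¹ • jucysMurphy ρ s a
        = algebraMap K B d⁻¹ * (algebraMap K B d + jucysMurphy ρ s a) := by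
      rw [mul_add, ← map_mul, inv_mul_cancel₀ hd0, map_one, Algebra.smul_def]
    rw [h]
    exact ((IsUnit.mk0 _ (inv_ne_zero hd0)).map _).mul
      ((isIntegerSplit_jucysMurphy ρ ha).isUnit_algebraMap_add hd)

end Gram

section Faithful

variable {K α C : Type*} [DecidableEq α] [Fintype α] [Field K] [Ring C] [Algebra K C]

theorem mul_gramElement (ρ : Perm α →* C) (φ : C →ₗ[K] K) (x : MonoidAlgebra K (Perm α)) :
    x * gramElement (MonoidAlgebra.of K (Perm α)) (fun g ↦ φ (ρ g)) Finset.univ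
      = ∑ g : Perm α,
          φ (ρ g⁻¹ * MonoidAlgebra.lift K C (Perm α) ρ x) • MonoidAlgebra.of K (Perm α) g := by
  induction x using MonoidAlgebra.induction_on with
  | of h =>
    have huniv : permsOfFinset (Finset.univ : Finset α) = Finset.univ := by
      ext
      simp [mem_perms_of_finset_iff]
    rw [gramElement, huniv, Finset.mul_sum]
    refine Fintype.sum_equiv ((Equiv.inv _).trans (Equiv.mulLeft h)) _ _ fun g ↦ ?_
    simp [← map_mul]
  | add x y hx hy =>
    simp only [add_mul, hx, hy, map_add, mul_add, add_smul, Finset.sum_add_distrib]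
  | smul r x hx =>
    simp only [smul_mul_assoc, hx, map_smul, mul_smul_comm, Finset.smul_sum, smul_smul,
      smul_eq_mul]

theorem factorial_card_le_finrank [FiniteDimensional K C] (ρ : Perm α →* C) (φ : C →ₗ[K] K) {d : K}
    (hd : ∀ n : ℤ, d ≠ n)
    (hφ : ∀ a b h, a ≠ b → h a = a → d * φ (ρ (swap a b * h)) = φ (ρ h)) (hφ1 : φ 1 ≠ 0) :
    (Fintype.card α).factorial ≤ Module.finrank K C := by
  have hunit := isUnit_gramElement (f := fun g ↦ φ (ρ g)) (MonoidAlgebra.of K (Perm α)) hd hφ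
    (by rwa [map_one]) Finset.univ
  have hinj : Function.Injective (MonoidAlgebra.lift K C (Perm α) ρ) := by
    refine (injective_iff_map_eq_zero _).mpr fun x hx ↦ hunit.mul_left_eq_zero.mp ?_
    rw [mul_gramElement, hx]
    simp only [mul_zero, map_zero, zero_smul, Finset.sum_const_zero]
  calc (Fintype.card α).factorial = Module.finrank K (MonoidAlgebra K (Perm α)) := by
        rw [Module.finrank_eq_card_basis (MonoidAlgebra.basis (Perm α) K), Fintype.card_perm]
    _ ≤ Module.finrank K C :=
        LinearMap.finrank_le_finrank_of_injective
          (f := (MonoidAlgebra.lift K C (Perm α) ρ).toLinearMap) hinj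

end Faithful

section SymmetricGroup

/-- The relations of the adjacent transpositions `(i i+1)` in the symmetric group on `N + 1`
letters, for a family of elements of a monoid. -/
structure IsCoxeterFamily {M : Type*} [Monoid M] {N : ℕ} (c : Fin N → M) : Prop where
  sq : ∀ i, c i * c i = 1
  comm : ∀ i j : Fin N, (i : ℕ) + 1 < j → Commute (c i) (c j)
  braid : ∀ i j : Fin N, (i : ℕ) + 1 = j → c i * c j * c i = c j * c i * c j

/-- The product `c (p - 1) * ⋯ * c 1 * c 0`. The products of the adjacent transpositions represent
the left cosets of the stabilizer of the letter `0`. -/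
def descProd {M : Type*} [Monoid M] {N : ℕ} (c : Fin N → M) : Fin (N + 1) → M :=
  Fin.induction 1 fun i t ↦ c i * t

theorem descProd_zero {M : Type*} [Monoid M] {N : ℕ} (c : Fin N → M) : descProd c 0 = 1 :=
  rfl

theorem descProd_succ {M : Type*} [Monoid M] {N : ℕ} (c : Fin N → M) (i : Fin N) :
    descProd c i.succ = c i * descProd c i.castSucc :=
  Fin.induction_succ ..

theorem isCoxeterFamily_swap (N : ℕ) :
    IsCoxeterFamily fun i : Fin N ↦ swap i.castSucc i.succ where
  sq _ := Equiv.swap_mul_self ..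
  comm i j hij := by
    refine (Equiv.Perm.disjoint_swap_swap ?_).commute
    simp [Fin.ext_iff]
    omega
  braid i j hij := by
    have h : i.succ = j.castSucc := Fin.ext hij
    have hij' : i.castSucc ≠ j.castSucc := by simp [Fin.ext_iff]; omega
    have hj : j.castSucc ≠ j.succ := Fin.castSucc_lt_succ.ne
    have hi : i.castSucc ≠ j.succ := by simp [Fin.ext_iff]; omega
    rw [h, Equiv.swap_comm i.castSucc, Equiv.swap_comm j.castSucc j.succ,
      Equiv.swap_mul_swap_mul_swap hj.symm hi.symm, Equiv.swap_comm j.succ j.castSucc,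
      Equiv.swap_comm j.castSucc i.castSucc, Equiv.swap_mul_swap_mul_swap hij' hi,
      Equiv.swap_comm]

namespace IsCoxeterFamily

variable {M : Type*} [Monoid M] {N : ℕ} {c : Fin N → M}

theorem prodMk {M' : Type*} [Monoid M'] {c' : Fin N → M'} (hc : IsCoxeterFamily c)
    (hc' : IsCoxeterFamily c') : IsCoxeterFamily fun i ↦ (c i, c' i) where
  sq i := Prod.ext (hc.sq i) (hc'.sq i)
  comm i j hij := Prod.ext (hc.comm i j hij) (hc'.comm i j hij)
  braid i j hij := Prod.ext (hc.braid i j hij) (hc'.braid i j hij)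

theorem comp_succ {c : Fin (N + 1) → M} (hc : IsCoxeterFamily c) :
    IsCoxeterFamily (c ∘ Fin.succ) where
  sq i := hc.sq i.succ
  comm i j hij := hc.comm i.succ j.succ (by simpa using hij)
  braid i j hij := hc.braid i.succ j.succ (by simpa using hij)

theorem commute_descProd (hc : IsCoxeterFamily c) {j : Fin N} {p : Fin (N + 1)}
    (hp : (p : ℕ) < j) : Commute (c j) (descProd c p) := by
  induction p using Fin.induction with
  | zero => exact Commute.one_right _
  | succ p ih =>
    rw [Fin.val_succ] at hp
    rw [descProd_succ]
    exact (hc.comm p j hp).symm.mul_right (ih (Nat.lt_of_succ_lt hp))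

theorem mul_descProd_succ (hc : IsCoxeterFamily c) (j : Fin N) :
    c j * descProd c j.succ = descProd c j.castSucc := by
  rw [descProd_succ, ← mul_assoc, hc.sq, one_mul]

theorem semiconjBy_descProd (hc : IsCoxeterFamily c) {i j : Fin N} (hij : (i : ℕ) + 1 = j)
    {p : Fin (N + 1)} (hp : (j : ℕ) < p) : SemiconjBy (descProd c p) (c j) (c i) := by
  induction p using Fin.induction with
  | zero => exact absurd hp (Nat.not_lt_zero _)
  | succ p ih =>
    rw [descProd_succ]
    rcases (Nat.lt_succ_iff.mp hp).lt_or_eq with hlt | heq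
    · exact SemiconjBy.mul_left (hc.comm i p (hij ▸ hlt)).symm (ih hlt)
    · obtain rfl : j = p := Fin.ext heq
      have hdesc : descProd c j.castSucc = c i * descProd c i.castSucc := by
        rw [← descProd_succ]
        exact congrArg _ (Fin.ext hij.symm)
      have hcomm : Commute (c j) (descProd c i.castSucc) :=
        hc.commute_descProd (by rw [Fin.val_castSucc]; omega)
      rw [hdesc, ← mul_assoc]
      have hbraid : SemiconjBy (c j * c i) (c j) (c i) := by
        rw [SemiconjBy, ← hc.braid i j hij, mul_assoc]
      exact hbraid.mul_left hcomm.symm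

theorem closure_range_subset {c : Fin (N + 1) → M} (hc : IsCoxeterFamily c) :
    (Submonoid.closure (Set.range c) : Set M) ⊆
      (fun q : M × M ↦ q.1 * q.2) '' Set.range (descProd c) ×ˢ
        (Submonoid.closure (Set.range (c ∘ Fin.succ)) : Set M) := by
  intro x hx
  have hmem (i : Fin (N + 1)) (hi : i ≠ 0) {y : M}
      (hy : y ∈ Submonoid.closure (Set.range (c ∘ Fin.succ))) :
      c i * y ∈ Submonoid.closure (Set.range (c ∘ Fin.succ)) :=
    mul_mem (Submonoid.subset_closure ⟨i.pred hi, congrArg c (Fin.succ_pred i hi)⟩) hy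
  induction hx using Submonoid.closure_induction_left with
  | one => exact ⟨(1, 1), ⟨⟨0, descProd_zero c⟩, one_mem _⟩, one_mul 1⟩
  | mul_left _ hj x _ ih =>
    obtain ⟨j, rfl⟩ := hj
    obtain ⟨⟨_, y⟩, ⟨⟨p, rfl⟩, hy⟩, rfl⟩ := ih
    rcases lt_trichotomy (p : ℕ) j with hpj | hpj | hpj
    · refine ⟨(descProd c p, c j * y), ⟨⟨p, rfl⟩, hmem j ?_ hy⟩, ?_⟩
      · exact Fin.ne_of_gt (Nat.zero_lt_of_lt hpj)
      · exact (hc.commute_descProd hpj).left_comm y |>.symm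
    · obtain rfl : p = j.castSucc := Fin.ext hpj
      exact ⟨(descProd c j.succ, y), ⟨⟨j.succ, rfl⟩, hy⟩, by simp only [descProd_succ, mul_assoc]⟩
    rcases (Nat.succ_le_of_lt hpj).lt_or_eq with hpj | hpj
    · have hj : (j : ℕ) + 1 < N + 1 := by omega
      refine ⟨(descProd c p, c ⟨j + 1, hj⟩ * y), ⟨⟨p, rfl⟩, hmem _ (by simp) hy⟩, ?_⟩
      simp only [← mul_assoc, (hc.semiconjBy_descProd (i := j) (j := ⟨j + 1, hj⟩) rfl hpj).eq]
    · obtain rfl : p = j.succ := Fin.ext hpj.symm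
      refine ⟨(descProd c j.castSucc, y), ⟨⟨j.castSucc, rfl⟩, hy⟩, ?_⟩
      simp only [← mul_assoc, hc.mul_descProd_succ]

theorem encard_closure_range_le (hc : IsCoxeterFamily c) :
    (Submonoid.closure (Set.range c) : Set M).encard ≤ (N + 1).factorial := by
  induction N with
  | zero => simp
  | succ N ih =>
    calc (Submonoid.closure (Set.range c) : Set M).encard
        ≤ (Set.range (descProd c) ×ˢ
            (Submonoid.closure (Set.range (c ∘ Fin.succ)) : Set M)).encard :=
          (Set.encard_le_encard hc.closure_range_subset).trans (Set.encard_image_le ..)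
      _ = (Set.range (descProd c)).encard *
            (Submonoid.closure (Set.range (c ∘ Fin.succ)) : Set M).encard := Set.encard_prod
      _ ≤ (N + 2 : ℕ) * (N + 1).factorial := by
          gcongr
          · simpa [add_assoc, one_add_one_eq_two] using Set.encard_image_le (descProd c) Set.univ
          · exact ih hc.comp_succ
      _ = (N + 1 + 1).factorial := by rw [Nat.factorial_succ (N + 1), Nat.cast_mul]

/-- The graph of the representation is the submonoid of `Perm (Fin (N + 1)) × M` generated by the
pairs `(swap i (i + 1), c i)`: it maps onto the symmetric group and has at most `(N + 1)!`
elements. -/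
theorem exists_monoidHom (hc : IsCoxeterFamily c) :
    ∃ ρ : Perm (Fin (N + 1)) →* M, ∀ i : Fin N, ρ (swap i.castSucc i.succ) = c i := by
  let S : Fin N → Perm (Fin (N + 1)) × M := fun i ↦ (swap i.castSucc i.succ, c i)
  let G : Submonoid (Perm (Fin (N + 1)) × M) := Submonoid.closure (Set.range S)
  have hcard : (G : Set (Perm (Fin (N + 1)) × M)).encard ≤ (N + 1).factorial :=
    ((isCoxeterFamily_swap N).prodMk hc).encard_closure_range_le
  have : Finite G := Set.finite_of_encard_le_coe hcard
  let π : G →* Perm (Fin (N + 1)) := (MonoidHom.fst _ M).comp G.subtype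
  have hsurj : Function.Surjective π := by
    rw [← MonoidHom.mrange_eq_top, MonoidHom.mrange_comp, Submonoid.mrange_subtype,
      MonoidHom.map_mclosure, ← Set.range_comp]
    exact Equiv.Perm.mclosure_swap_castSucc_succ N
  have hbij : Function.Bijective π := by
    refine hsurj.bijective_of_nat_card_le ?_
    rw [Nat.card_eq_fintype_card (α := Perm _), Fintype.card_perm, Fintype.card_fin]
    rwa [← Set.Finite.cast_ncard_eq (Set.toFinite _), Nat.cast_le] at hcard
  refine ⟨((MonoidHom.snd _ M).comp G.subtype).comp (MulEquiv.ofBijective π hbij).symm,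
    fun i ↦ ?_⟩
  have hi : (MulEquiv.ofBijective π hbij).symm (swap i.castSucc i.succ)
      = ⟨S i, Submonoid.subset_closure ⟨i, rfl⟩⟩ := by
    rw [MulEquiv.symm_apply_eq]
    rfl
  exact congrArg (fun g : G ↦ g.1.2) hi

end IsCoxeterFamily

theorem descProd_swap_apply_zero {N : ℕ} (p : Fin (N + 1)) :
    descProd (fun i : Fin N ↦ swap i.castSucc i.succ) p 0 = p := by
  induction p using Fin.induction with
  | zero => rfl
  | succ p ih => rw [descProd_succ, Equiv.Perm.mul_apply, ih, Equiv.swap_apply_left]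

theorem mem_closure_swap_of_apply_zero {N : ℕ} {h : Perm (Fin (N + 2))} (h0 : h 0 = 0) :
    h ∈ Submonoid.closure (Set.range fun i : Fin N ↦ swap i.succ.castSucc i.succ.succ) := by
  have hh := Equiv.Perm.mclosure_swap_castSucc_succ (N + 1) ▸ Submonoid.mem_top h
  obtain ⟨⟨_, y⟩, ⟨⟨p, rfl⟩, hy⟩, rfl⟩ :=
    (isCoxeterFamily_swap (N + 1)).closure_range_subset hh
  have hfix : y ∈ MulAction.stabilizerSubmonoid _ (0 : Fin (N + 2)) := by
    refine Submonoid.closure_le.mpr ?_ hy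
    rintro _ ⟨i, rfl⟩
    exact Equiv.swap_apply_of_ne_of_ne (Fin.castSucc_ne_zero_of_lt i.succ_pos).symm
      (Fin.succ_ne_zero _).symm
  have hp : p = 0 := by
    rw [← h0, Equiv.Perm.mul_apply, show y 0 = 0 from hfix, descProd_swap_apply_zero]
  simp only [hp, descProd_zero, one_mul]
  exact hy

end SymmetricGroup

section PairMap

variable {k A C : Type*} [CommRing k] [Ring A] [Algebra k A] [Ring C] [Algebra k C]

/-- The linear map `a ⊗ b ↦ f a * g b`. If `f` and `g` are the inclusions of the `i`-th and of the
`j`-th factor into a tensor power of `A`, it sends `z` to `zᵢⱼ`. -/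
noncomputable def pairMap (f g : A →ₐ[k] C) : A ⊗[k] A →ₗ[k] C :=
  LinearMap.mul' k C ∘ₗ TensorProduct.map f.toLinearMap g.toLinearMap

@[simp]
theorem pairMap_tmul (f g : A →ₐ[k] C) (a b : A) : pairMap f g (a ⊗ₜ b) = f a * g b :=
  rfl

theorem semiconjBy_pairMap {f g f' g' : A →ₐ[k] C} {q : C} (hf : ∀ x, SemiconjBy q (f x) (f' x))
    (hg : ∀ x, SemiconjBy q (g x) (g' x)) (z : A ⊗[k] A) :
    SemiconjBy q (pairMap f g z) (pairMap f' g' z) := by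
  induction z using TensorProduct.induction_on with
  | zero => simp
  | tmul a b => exact (hf a).mul_right (hg b)
  | add a b ha hb => simpa only [map_add] using ha.add_right hb

theorem commute_pairMap {f g f' g' : A →ₐ[k] C} (hff' : ∀ x y, Commute (f x) (f' y))
    (hfg' : ∀ x y, Commute (f x) (g' y)) (hgf' : ∀ x y, Commute (g x) (f' y))
    (hgg' : ∀ x y, Commute (g x) (g' y)) (z w : A ⊗[k] A) :
    Commute (pairMap f g z) (pairMap f' g' w) :=
  semiconjBy_pairMap
    (fun y ↦ (semiconjBy_pairMap (fun x ↦ (hff' x y).symm) (fun x ↦ (hgf' x y).symm) z).symm)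
    (fun y ↦ (semiconjBy_pairMap (fun x ↦ (hfg' x y).symm) (fun x ↦ (hgg' x y).symm) z).symm) w

theorem pairMap_mem {S : Subalgebra k C} {f g : A →ₐ[k] C} (hf : ∀ x, f x ∈ S)
    (hg : ∀ x, g x ∈ S) (z : A ⊗[k] A) : pairMap f g z ∈ S := by
  induction z using TensorProduct.induction_on with
  | zero => simp
  | tmul a b => exact mul_mem (hf a) (hg b)
  | add a b ha hb => simpa only [map_add] using add_mem ha hb

variable {f g : A →ₐ[k] C}

theorem lift_eq_pairMap (hfg : ∀ x y, Commute (f x) (g y)) (z : A ⊗[k] A) :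
    Algebra.TensorProduct.lift f g hfg z = pairMap f g z := by
  induction z using TensorProduct.induction_on with
  | zero => simp
  | tmul a b => simp
  | add a b ha hb => simp only [map_add, ha, hb]

theorem pairMap_mul (hfg : ∀ x y, Commute (f x) (g y)) (z w : A ⊗[k] A) :
    pairMap f g (z * w) = pairMap f g z * pairMap f g w := by
  simp only [← lift_eq_pairMap hfg, map_mul]

theorem pairMap_one : pairMap f g 1 = 1 := by
  rw [Algebra.TensorProduct.one_def, pairMap_tmul, map_one, map_one, mul_one]

theorem pairMap_comm (hfg : ∀ x y, Commute (f x) (g y)) (z : A ⊗[k] A) :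
    pairMap f g (TensorProduct.comm k A A z) = pairMap g f z := by
  induction z using TensorProduct.induction_on with
  | zero => simp
  | tmul a b => exact hfg b a
  | add a b ha hb => simp only [map_add, ha, hb]

theorem pairMap_map {B : Type*} [Ring B] [Algebra k B] (ρ : B →ₐ[k] A) (z : B ⊗[k] B) :
    pairMap f g (Algebra.TensorProduct.map ρ ρ z) = pairMap (f.comp ρ) (g.comp ρ) z := by
  induction z using TensorProduct.induction_on with
  | zero => simp
  | tmul a b => simp
  | add a b ha hb => simp only [map_add, ha, hb]

end PairMap

section Flip

variable {k X C : Type*} [CommRing k] [Ring X] [Algebra k X] [Ring C] [Algebra k C]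

/-- `P` behaves like the flip of `V ⊗ V`, seen as an element of `End V ⊗ End V`. -/
structure IsFlip (P : X ⊗[k] X) : Prop where
  mul_self : P * P = 1
  mul_tmul : ∀ x y, P * (x ⊗ₜ y) = (y ⊗ₜ x) * P

namespace IsFlip

variable {P : X ⊗[k] X} (hP : IsFlip P)
include hP

theorem mul (z : X ⊗[k] X) : P * z = TensorProduct.comm k X X z * P := by
  induction z using TensorProduct.induction_on with
  | zero => simp
  | tmul x y => exact hP.mul_tmul x y
  | add a b ha hb => simp only [mul_add, add_mul, map_add, ha, hb]

theorem mul_mul_self {r : X ⊗[k] X} (hr : TensorProduct.comm k X X r * r = 1) :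
    P * r * (P * r) = 1 := by
  calc P * r * (P * r) = TensorProduct.comm k X X r * (P * P) * r := by
        rw [hP.mul r, mul_assoc, mul_assoc, mul_assoc, hP.mul r]
    _ = 1 := by rw [hP.mul_self, mul_one, hr]

variable {f g h : X →ₐ[k] C} (hfg : ∀ x y, Commute (f x) (g y))
include hfg

theorem semiconjBy_left (x : X) : SemiconjBy (pairMap f g P) (f x) (g x) := by
  have h := congrArg (pairMap f g) (hP.mul_tmul x 1)
  simpa [pairMap_mul hfg, SemiconjBy] using h

theorem semiconjBy_right (x : X) : SemiconjBy (pairMap f g P) (g x) (f x) := by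
  have h := congrArg (pairMap f g) (hP.mul_tmul 1 x)
  simpa [pairMap_mul hfg, SemiconjBy] using h

variable (hgh : ∀ x y, Commute (g x) (h y)) (hfh : ∀ x y, Commute (f x) (h y))
include hgh hfh

theorem braid {r : X ⊗[k] X}
    (hYB : pairMap f g r * pairMap f h r * pairMap g h r
      = pairMap g h r * pairMap f h r * pairMap f g r) :
    pairMap f g (P * r) * pairMap g h (P * r) * pairMap f g (P * r)
      = pairMap g h (P * r) * pairMap f g (P * r) * pairMap g h (P * r) := by
  have hfg_h (x) : Commute (pairMap f g P) (h x) :=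
    (semiconjBy_pairMap (fun y ↦ (hfh y x).symm) (fun y ↦ (hgh y x).symm) P).symm
  have hgh_f (x) : Commute (pairMap g h P) (f x) :=
    (semiconjBy_pairMap (fun y ↦ hfg x y) (fun y ↦ hfh x y) P).symm
  have hfg_gh (z) : pairMap f g P * pairMap f h z = pairMap g h z * pairMap f g P :=
    semiconjBy_pairMap (hP.semiconjBy_left hfg) hfg_h z
  have hfg_fh (z) : pairMap f g P * pairMap g h z = pairMap f h z * pairMap f g P :=
    semiconjBy_pairMap (hP.semiconjBy_right hfg) hfg_h z
  have hgh_fg (z) : pairMap g h P * pairMap f h z = pairMap f g z * pairMap g h P :=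
    semiconjBy_pairMap hgh_f (hP.semiconjBy_right hgh) z
  have hgh_fh (z) : pairMap g h P * pairMap f g z = pairMap f h z * pairMap g h P :=
    semiconjBy_pairMap hgh_f (hP.semiconjBy_left hgh) z
  have hPfg : pairMap f g P * pairMap f g P = 1 := by
    rw [← pairMap_mul hfg, hP.mul_self, pairMap_one]
  have hPgh : pairMap g h P * pairMap g h P = 1 := by
    rw [← pairMap_mul hgh, hP.mul_self, pairMap_one]
  have hflip : pairMap f g P * pairMap g h P * pairMap f g P
      = pairMap g h P * pairMap f g P * pairMap g h P := by
    linear_combination (norm := noncomm_ring) -pairMap f g P * hfg_gh P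
      + pairMap g h P * hgh_fg P + hPfg * pairMap f h P - hPgh * pairMap f h P
  simp only [pairMap_mul hfg, pairMap_mul hgh]
  calc pairMap f g P * pairMap f g r * (pairMap g h P * pairMap g h r)
        * (pairMap f g P * pairMap f g r)
      = pairMap f g P * pairMap g h P * pairMap f g P
          * (pairMap g h r * pairMap f h r * pairMap f g r) := by
        linear_combination (norm := noncomm_ring)
          -pairMap f g P * hgh_fg r * pairMap g h r * pairMap f g P * pairMap f g r
          - pairMap f g P * pairMap g h P * pairMap f h r * hfg_gh r * pairMap f g r
          - pairMap f g P * pairMap g h P * hfg_fh r * pairMap f h r * pairMap f g r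
    _ = pairMap g h P * pairMap f g P * pairMap g h P
          * (pairMap f g r * pairMap f h r * pairMap g h r) := by rw [hflip, hYB]
    _ = pairMap g h P * pairMap g h r * (pairMap f g P * pairMap f g r)
          * (pairMap g h P * pairMap g h r) := by
        linear_combination (norm := noncomm_ring)
          pairMap g h P * hfg_gh r * pairMap f g r * pairMap g h P * pairMap g h r
          + pairMap g h P * pairMap f g P * pairMap f h r * hgh_fg r * pairMap g h r
          + pairMap g h P * pairMap f g P * hgh_fh r * pairMap f h r * pairMap g h r

end IsFlip

end Flip

section MatrixFlip

variable (k m : Type*) [CommRing k] [Fintype m] [DecidableEq m]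

/-- The tensor `∑ Eᵢⱼ ⊗ Eⱼᵢ`, which acts on `kᵐ ⊗ kᵐ` as the flip. -/
noncomputable def matrixFlip : Matrix m m k ⊗[k] Matrix m m k :=
  ∑ i, ∑ j, Matrix.single i j 1 ⊗ₜ Matrix.single j i 1

variable {m}

theorem single_mul_single_eq_ite (a b c d : m) :
    Matrix.single a b (1 : k) * Matrix.single c d 1 = if b = c then Matrix.single a d 1 else 0 := by
  split_ifs with h
  · rw [h, Matrix.single_mul_single_same, mul_one]
  · exact Matrix.single_mul_single_of_ne _ _ _ _ h _

theorem matrixFlip_mul_single (a b c d : m) :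
    matrixFlip k m * (Matrix.single a b 1 ⊗ₜ Matrix.single c d 1)
      = Matrix.single c b 1 ⊗ₜ Matrix.single a d 1 := by
  simp [matrixFlip, Finset.sum_mul, single_mul_single_eq_ite, TensorProduct.ite_tmul,
    TensorProduct.tmul_ite]

theorem single_mul_matrixFlip (a b c d : m) :
    (Matrix.single a b 1 ⊗ₜ Matrix.single c d 1) * matrixFlip k m
      = Matrix.single a d 1 ⊗ₜ Matrix.single c b 1 := by
  simp [matrixFlip, Finset.mul_sum, single_mul_single_eq_ite, TensorProduct.ite_tmul,
    TensorProduct.tmul_ite]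

variable (m)

theorem isFlip_matrixFlip : IsFlip (matrixFlip k m) where
  mul_self := by
    nth_rw 2 [matrixFlip]
    simp only [Finset.mul_sum, matrixFlip_mul_single, ← TensorProduct.tmul_sum,
      ← TensorProduct.sum_tmul, Matrix.sum_single_one, Algebra.TensorProduct.one_def]
  mul_tmul x y := by
    have h : LinearMap.mulLeft k (matrixFlip k m)
        = LinearMap.mulRight k (matrixFlip k m) ∘ₗ
          (TensorProduct.comm k (Matrix m m k) (Matrix m m k)).toLinearMap := by
      refine ((Matrix.stdBasis k m m).tensorProduct (Matrix.stdBasis k m m)).ext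
        fun ⟨⟨a, b⟩, ⟨c, d⟩⟩ ↦ ?_
      simp [Matrix.stdBasis_eq_single, matrixFlip_mul_single, single_mul_matrixFlip]
    exact LinearMap.congr_fun h (x ⊗ₜ y)

variable {m}

/-- The linear map `a ⊗ b ↦ b * (w * a)`. For matrices it is the partial trace, weighted by `w` in
the second factor, of the flip times `a ⊗ b`. -/
noncomputable def sandwich {A : Type*} [Ring A] [Algebra k A] (w : A) : A ⊗[k] A →ₗ[k] A :=
  LinearMap.mul' k A ∘ₗ LinearMap.lTensor A (LinearMap.mulLeft k w) ∘ₗ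
    (TensorProduct.comm k A A).toLinearMap

@[simp]
theorem sandwich_tmul {A : Type*} [Ring A] [Algebra k A] (w a b : A) :
    sandwich k w (a ⊗ₜ b) = b * (w * a) :=
  rfl

theorem sandwich_map {A B : Type*} [Ring A] [Algebra k A] [Ring B] [Algebra k B] (ρ : A →ₐ[k] B)
    (w : A) (z : A ⊗[k] A) :
    sandwich k (ρ w) (Algebra.TensorProduct.map ρ ρ z) = ρ (sandwich k w z) := by
  induction z using TensorProduct.induction_on with
  | zero => simp
  | tmul x y => simp
  | add a b ha hb => simp only [map_add, ha, hb]

theorem partialTrace_matrixFlip_mul (w : Matrix m m k) (z : Matrix m m k ⊗[k] Matrix m m k) :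
    TensorProduct.rid k _ (LinearMap.lTensor _
      (Matrix.traceLinearMap m k k ∘ₗ LinearMap.mulLeft k w) (matrixFlip k m * z))
      = sandwich k w z := by
  induction z using TensorProduct.induction_on with
  | zero => simp
  | tmul x y =>
    have htrace (i j : m) : (w * (Matrix.single j i 1 * y)).trace = (y * w) i j := by
      rw [Matrix.trace_mul_comm, mul_assoc, Matrix.trace_single_mul, one_smul]
    have hsum : ∑ i, ∑ j, (y * w) i j • Matrix.single i j (1 : k) = y * w := by
      conv_rhs => rw [Matrix.matrix_eq_sum_single (y * w)]
      simp only [Matrix.smul_single, smul_eq_mul, mul_one]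
    simp only [matrixFlip, Finset.sum_mul, Algebra.TensorProduct.tmul_mul_tmul, map_sum,
      LinearMap.lTensor_tmul, LinearMap.comp_apply, LinearMap.mulLeft_apply,
      Matrix.traceLinearMap_apply, TensorProduct.rid_tmul, htrace, ← smul_mul_assoc]
    simp only [← Finset.sum_mul, hsum, sandwich_tmul, mul_assoc]
  | add a b ha hb => simp only [mul_add, map_add, ha, hb]

end MatrixFlip

section TensorPower

open PiTensorProduct

section Factor

variable {k X ι : Type*} [CommRing k] [Ring X] [Algebra k X] [DecidableEq ι]

variable (k X) in
/-- The inclusion of the `i`-th factor into the `ι`-th tensor power of `X`. -/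
noncomputable abbrev factorHom (i : ι) : X →ₐ[k] ⨂[k] _ : ι, X :=
  singleAlgHom (R := k) (A := fun _ : ι ↦ X) i

theorem commute_factorHom {i j : ι} (hij : i ≠ j) (x y : X) :
    Commute (factorHom k X i x) (factorHom k X j y) :=
  Commute.tprod (R := k) (Pi.mulSingle_commute (f := fun _ : ι ↦ X) hij x y)

theorem commute_tprod_pairMap_factorHom {i j : ι} (hij : i ≠ j) {u : X} {z : X ⊗[k] X}
    (hz : Commute (u ⊗ₜ u) z) :
    Commute (tprod k fun _ ↦ u) (pairMap (factorHom k X i) (factorHom k X j) z) := by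
  let v : ι → X := fun l ↦ if l = i ∨ l = j then 1 else u
  have hv {l : ι} (hl : l = i ∨ l = j) (x : X) : Commute (tprod k v) (factorHom k X l x) := by
    refine Commute.tprod (R := k) (a₁ := v) (Pi.commute_iff.mpr fun l' ↦ ?_)
    rcases eq_or_ne l' l with rfl | h
    · simp [v, hl]
    · simp [h]
  have huv : tprod k (fun _ ↦ u)
      = tprod k v * pairMap (factorHom k X i) (factorHom k X j) (u ⊗ₜ u) := by
    rw [pairMap_tmul, factorHom, factorHom, singleAlgHom_apply, singleAlgHom_apply,
      tprod_mul_tprod, tprod_mul_tprod]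
    congr 1
    ext l
    rcases eq_or_ne l i with rfl | hi
    · simp [v, hij]
    rcases eq_or_ne l j with rfl | hj
    · simp [v, hij.symm]
    · simp [v, hi, hj]
  rw [huv]
  refine Commute.mul_left (semiconjBy_pairMap (hv (.inl rfl)) (hv (.inr rfl)) z) ?_
  rw [Commute, SemiconjBy, ← pairMap_mul (commute_factorHom hij),
    ← pairMap_mul (commute_factorHom hij), hz.eq]

variable (k X) in
/-- The subalgebra spanned by the pure tensors whose `j`-th component is `1`: the elements acting
trivially on the `j`-th factor, over which the partial trace there is linear. -/
noncomputable def subalgebraAway (j : ι) : Subalgebra k (⨂[k] _ : ι, X) :=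
  Algebra.adjoin k
    ((MonoidHom.mker (Pi.evalMonoidHom (fun _ : ι ↦ X) j)).map (tprodMonoidHom k) : Set _)

theorem factorHom_mem_subalgebraAway {i j : ι} (hij : i ≠ j) (x : X) :
    factorHom k X i x ∈ subalgebraAway k X j :=
  Algebra.subset_adjoin
    ⟨Pi.mulSingle i x, Pi.mulSingle_eq_of_ne (M := fun _ ↦ X) hij.symm x, rfl⟩

end Factor

section Functional

variable {k X ι : Type*} [CommRing k] [Ring X] [Algebra k X] [Fintype ι]

/-- The `ι`-th tensor power of a linear functional. -/
noncomputable def tensorPowerFunctional (ι : Type*) [Fintype ι] (τ : X →ₗ[k] k) :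
    (⨂[k] _ : ι, X) →ₗ[k] k :=
  lift ((MultilinearMap.mkPiAlgebra k ι k).compLinearMap fun _ ↦ τ)

@[simp]
theorem tensorPowerFunctional_tprod (τ : X →ₗ[k] k) (x : ι → X) :
    tensorPowerFunctional ι τ (tprod k x) = ∏ i, τ (x i) := by
  simp [tensorPowerFunctional]

theorem tensorPowerFunctional_one (τ : X →ₗ[k] k) :
    tensorPowerFunctional ι τ 1 = τ 1 ^ Fintype.card ι := by
  rw [one_def, tensorPowerFunctional_tprod]
  simp

theorem tensorPowerFunctional_mul_comm {τ : X →ₗ[k] k} (hτ : ∀ x y, τ (x * y) = τ (y * x))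
    (z w : ⨂[k] _ : ι, X) :
    tensorPowerFunctional ι τ (z * w) = tensorPowerFunctional ι τ (w * z) := by
  induction z using PiTensorProduct.induction_on with
  | add a b ha hb => simp only [add_mul, mul_add, map_add, ha, hb]
  | smul_tprod r x =>
    induction w using PiTensorProduct.induction_on with
    | add a b ha hb => simp only [add_mul, mul_add, map_add, ha, hb]
    | smul_tprod s y =>
      simp only [smul_mul_assoc, mul_smul_comm, map_smul, tprod_mul_tprod,
        tensorPowerFunctional_tprod, Pi.mul_apply, hτ (x _), smul_comm r s]

theorem tensorPowerFunctional_comp_mulLeft (τ : X →ₗ[k] k) (u : X) (z : ⨂[k] _ : ι, X) :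
    tensorPowerFunctional ι (τ ∘ₗ LinearMap.mulLeft k u) z
      = tensorPowerFunctional ι τ (tprod k (fun _ ↦ u) * z) := by
  induction z using PiTensorProduct.induction_on with
  | add a b ha hb => simp only [mul_add, map_add, ha, hb]
  | smul_tprod r x => simp [tprod_mul_tprod]

theorem tensorPowerFunctional_mul_comm_of_commute {τ : X →ₗ[k] k}
    (hτ : ∀ x y, τ (x * y) = τ (y * x)) {u : X} {z : ⨂[k] _ : ι, X}
    (hz : Commute (tprod k fun _ ↦ u) z) (w : ⨂[k] _ : ι, X) :
    tensorPowerFunctional ι (τ ∘ₗ LinearMap.mulLeft k u) (z * w)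
      = tensorPowerFunctional ι (τ ∘ₗ LinearMap.mulLeft k u) (w * z) := by
  rw [tensorPowerFunctional_comp_mulLeft, tensorPowerFunctional_comp_mulLeft, ← mul_assoc, hz.eq,
    mul_assoc, tensorPowerFunctional_mul_comm hτ, mul_assoc]

theorem tensorPowerFunctional_mul_factorHom [DecidableEq ι] (τ : X →ₗ[k] k) {j : ι}
    {z : ⨂[k] _ : ι, X} (hz : z ∈ subalgebraAway k X j) (x : X) :
    τ 1 * tensorPowerFunctional ι τ (z * factorHom k X j x)
      = τ x * tensorPowerFunctional ι τ z := by
  rw [← SetLike.mem_coe, ← Subalgebra.coe_toSubmodule, subalgebraAway, Algebra.adjoin_eq_span,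
    Submonoid.closure_eq] at hz
  induction hz using Submodule.span_induction with
  | zero => simp
  | add a b _ _ ha hb => simp only [add_mul, mul_add, map_add, ha, hb]
  | smul r a _ ha =>
    simp only [smul_mul_assoc, map_smul, smul_eq_mul, mul_left_comm _ r, ha]
  | mem _ hy =>
    obtain ⟨y, hy : y j = 1, rfl⟩ := hy
    have hne : ∀ i ∈ ({j} : Finset ι)ᶜ, τ (y i * (Pi.mulSingle j x : ι → X) i) = τ (y i) := by
      intro i hi
      rw [Pi.mulSingle_eq_of_ne (by simpa using hi), mul_one]
    rw [tprodMonoidHom_apply, factorHom, singleAlgHom_apply, tprod_mul_tprod,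
      tensorPowerFunctional_tprod, tensorPowerFunctional_tprod,
      Fintype.prod_eq_mul_prod_compl j, Fintype.prod_eq_mul_prod_compl j fun i ↦ τ (y i)]
    simp only [Pi.mul_apply, MonoidHom.mulSingle_apply, Finset.prod_congr rfl hne,
      Pi.mulSingle_eq_same, hy, one_mul]
    ring

theorem tensorPowerFunctional_mul_pairMap [DecidableEq ι] (τ : X →ₗ[k] k) {i j : ι} (hij : i ≠ j)
    {z : ⨂[k] _ : ι, X} (hz : z ∈ subalgebraAway k X j) (c : X ⊗[k] X) :
    τ 1 * tensorPowerFunctional ι τ (z * pairMap (factorHom k X i) (factorHom k X j) c)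
      = tensorPowerFunctional ι τ
          (z * factorHom k X i (TensorProduct.rid k X (LinearMap.lTensor X τ c))) := by
  induction c using TensorProduct.induction_on with
  | zero => simp only [map_zero, mul_zero]
  | tmul a b =>
    rw [pairMap_tmul, ← mul_assoc, tensorPowerFunctional_mul_factorHom τ
      (mul_mem hz (factorHom_mem_subalgebraAway hij a))]
    simp
  | add a b ha hb => simp only [map_add, mul_add, ha, hb]

end Functional

section Braiding

theorem mul_apply_swap_mul {M : Type*} [Mul M] {N : ℕ} {f : Perm (Fin (N + 2)) → M} {d : M}
    (hf : ∀ g h, f (g * h) = f (h * g)) (hd : ∀ h, h 0 = 0 → d * f (h * swap 1 0) = f h)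
    {a b : Fin (N + 2)} (hab : a ≠ b) {h : Perm (Fin (N + 2))} (ha : h a = a) :
    d * f (swap a b * h) = f h := by
  let g := swap (swap 0 a 1) b * swap 0 a
  have hg0 : g 0 = a := by
    have h1 : a ≠ swap 0 a 1 := by
      rw [ne_eq, eq_comm, Equiv.swap_apply_eq_iff, Equiv.swap_apply_right]
      exact one_ne_zero
    simp [g, Equiv.swap_apply_of_ne_of_ne h1 hab]
  have hg1 : g 1 = b := by
    simp [g]
  have hconj (x : Perm (Fin (N + 2))) : f (g⁻¹ * x * g) = f x := by
    rw [hf, mul_inv_cancel_left]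
  have hswap : g⁻¹ * (swap a b * h) * g = swap 1 0 * (g⁻¹ * h * g) := by
    rw [← hg0, ← hg1, Equiv.swap_apply_apply, Equiv.swap_comm 1 0]
    group
  have hfix : (g⁻¹ * h * g) 0 = 0 := by
    rw [Equiv.Perm.mul_apply, Equiv.Perm.mul_apply, hg0, ha, Equiv.Perm.inv_eq_iff_eq, hg0]
  rw [← hconj, hswap, hf, hd _ hfix, hconj]

section Representation

variable {k X : Type*} [CommRing k] [Ring X] [Algebra k X] {N : ℕ} {c : X ⊗[k] X}
  {ρ : Perm (Fin (N + 2)) →* ⨂[k] _ : Fin (N + 2), X}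
  (hρ : ∀ i : Fin (N + 1), ρ (swap i.castSucc i.succ)
    = pairMap (factorHom k X i.succ) (factorHom k X i.castSucc) c)
include hρ

theorem commute_tprod_braiding {u : X} (huc : Commute (u ⊗ₜ u) c) (g : Perm (Fin (N + 2))) :
    Commute (tprod k fun _ ↦ u) (ρ g) := by
  have hle : Submonoid.closure (Set.range fun i : Fin (N + 1) ↦ swap i.castSucc i.succ)
      ≤ (Submonoid.centralizer {tprod k fun _ ↦ u}).comap ρ := by
    rw [Submonoid.closure_le]
    rintro _ ⟨i, rfl⟩ _ rfl
    rw [hρ]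
    exact commute_tprod_pairMap_factorHom Fin.castSucc_lt_succ.ne' huc
  rw [Equiv.Perm.mclosure_swap_castSucc_succ] at hle
  exact hle (Submonoid.mem_top g) _ rfl

theorem braiding_mem_subalgebraAway {h : Perm (Fin (N + 2))} (h0 : h 0 = 0) :
    ρ h ∈ subalgebraAway k X 0 := by
  have hle : Submonoid.closure (Set.range fun i : Fin N ↦ swap i.succ.castSucc i.succ.succ)
      ≤ (subalgebraAway k X 0).toSubmonoid.comap ρ := by
    rw [Submonoid.closure_le]
    rintro _ ⟨i, rfl⟩
    change ρ (swap i.succ.castSucc i.succ.succ) ∈ subalgebraAway k X 0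
    rw [hρ]
    exact pairMap_mem (factorHom_mem_subalgebraAway (Fin.succ_ne_zero _))
      (factorHom_mem_subalgebraAway (Fin.castSucc_ne_zero_of_lt i.succ_pos)) c
  exact hle (mem_closure_swap_of_apply_zero h0)

theorem tensorPowerFunctional_braiding_mul_swap {τ : X →ₗ[k] k}
    (hpartial : TensorProduct.rid k X (LinearMap.lTensor X τ c) = 1)
    {h : Perm (Fin (N + 2))} (h0 : h 0 = 0) :
    τ 1 * tensorPowerFunctional (Fin (N + 2)) τ (ρ (h * swap 1 0))
      = tensorPowerFunctional (Fin (N + 2)) τ (ρ h) := by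
  have hρ0 : ρ (swap 1 0) = pairMap (factorHom k X 1) (factorHom k X 0) c := by
    rw [Equiv.swap_comm]
    exact hρ 0
  rw [map_mul, hρ0, tensorPowerFunctional_mul_pairMap τ one_ne_zero
    (braiding_mem_subalgebraAway hρ h0), hpartial, map_one (factorHom k X 1), mul_one]

end Representation

variable {K X : Type*} [Field K] [Ring X] [Algebra K X] [FiniteDimensional K X]

theorem finrank_tensorPower (n : ℕ) :
    Module.finrank K (⨂[K] _ : Fin n, X) = Module.finrank K X ^ n := by
  rw [Module.finrank_eq_card_basis (Basis.piTensorProduct fun _ : Fin n ↦ Module.finBasis K X)]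
  simp

theorem factorial_le_finrank_pow {τ : X →ₗ[K] K} (hτ : ∀ x y, τ (x * y) = τ (y * x)) {u : X}
    {c : X ⊗[K] X} (huc : Commute (u ⊗ₜ u) c)
    (hpartial : TensorProduct.rid K X (LinearMap.lTensor X (τ ∘ₗ LinearMap.mulLeft K u) c) = 1)
    (hu : ∀ n : ℤ, τ u ≠ n) {N : ℕ}
    (hc : IsCoxeterFamily fun i : Fin (N + 1) ↦
      pairMap (factorHom K X i.succ) (factorHom K X i.castSucc) c) :
    (N + 2).factorial ≤ Module.finrank K X ^ (N + 2) := by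
  obtain ⟨ρ, hρ⟩ := hc.exists_monoidHom
  let φ := tensorPowerFunctional (Fin (N + 2)) (τ ∘ₗ LinearMap.mulLeft K u)
  have hφu : (τ ∘ₗ LinearMap.mulLeft K u) 1 = τ u := by simp
  have hmarkov (h : Perm (Fin (N + 2))) (h0 : h 0 = 0) :
      τ u * φ (ρ (h * swap 1 0)) = φ (ρ h) :=
    hφu ▸ tensorPowerFunctional_braiding_mul_swap hρ hpartial h0
  have hφ (g h : Perm (Fin (N + 2))) : φ (ρ (g * h)) = φ (ρ (h * g)) := by
    simpa only [map_mul ρ] using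
      tensorPowerFunctional_mul_comm_of_commute hτ (commute_tprod_braiding hρ huc g) (ρ h)
  have hφ1 : φ 1 ≠ 0 := by
    rw [tensorPowerFunctional_one, hφu]
    exact pow_ne_zero _ (by simpa using hu 0)
  simpa only [finrank_tensorPower, Fintype.card_fin] using factorial_card_le_finrank ρ φ hu
    (fun a b h hab ha ↦ mul_apply_swap_mul (f := fun g ↦ φ (ρ g)) hφ hmarkov hab ha) hφ1

end Braiding

end TensorPower

section Hopf

variable {k A : Type*} [CommRing k] [Ring A] [HopfAlgebra k A] {R : A ⊗[k] A}

local notation "𝒮" => HopfAlgebra.antipode k (A := A)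

theorem counit_rTensor_R13map_mul (x y : A ⊗[k] A) :
    TensorProduct.lid k (A ⊗[k] A) ((Coalgebra.counit (R := k) (A := A)).rTensor (A ⊗[k] A)
      (R13map k A x * ((1 : A) ⊗ₜ y)))
      = ((1 : A) ⊗ₜ (TensorProduct.lid k A ((Coalgebra.counit (R := k)).rTensor A x))) * y := by
  induction x using TensorProduct.induction_on with
  | zero => simp
  | tmul a b =>
    rw [R13map, TensorProduct.map_tmul, Algebra.TensorProduct.tmul_mul_tmul]
    simp only [mul_one, LinearMap.id_apply, TensorProduct.mk_apply, LinearMap.rTensor_tmul,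
      TensorProduct.lid_tmul, TensorProduct.tmul_smul, smul_mul_assoc]
  | add a b ha hb => simp only [map_add, add_mul, ha, hb, TensorProduct.tmul_add]

theorem counit_rTensor_assoc_comul (x : A ⊗[k] A) :
    TensorProduct.lid k (A ⊗[k] A) ((Coalgebra.counit (R := k) (A := A)).rTensor (A ⊗[k] A)
      (TensorProduct.assoc k A A A ((Coalgebra.comul (R := k)).rTensor A x))) = x := by
  have hassoc (z : A ⊗[k] A) (b : A) :
      TensorProduct.lid k (A ⊗[k] A) ((Coalgebra.counit (R := k) (A := A)).rTensor (A ⊗[k] A)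
        (TensorProduct.assoc k A A A (z ⊗ₜ b)))
        = TensorProduct.lid k A ((Coalgebra.counit (R := k)).rTensor A z) ⊗ₜ b := by
    induction z using TensorProduct.induction_on with
    | zero => simp
    | tmul a c => simp [TensorProduct.smul_tmul']
    | add a c ha hc => simp only [map_add, TensorProduct.add_tmul, ha, hc]
  induction x using TensorProduct.induction_on with
  | zero => simp
  | tmul a b => rw [LinearMap.rTensor_tmul, hassoc, Coalgebra.rTensor_counit_comul]; simp
  | add a b ha hb => simp only [map_add, ha, hb]

theorem IsQuasitriangular.counit_rTensor (hR : IsQuasitriangular k A R) :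
    TensorProduct.lid k A ((Coalgebra.counit (R := k)).rTensor A R) = 1 := by
  have h := counit_rTensor_R13map_mul R R
  rw [← hR.2.1, counit_rTensor_assoc_comul] at h
  have h1 := hR.1.mul_right_cancel ((one_mul R).trans h)
  simpa [Algebra.TensorProduct.one_def] using congrArg (LinearMap.mul' k A) h1.symm

theorem IsQuasitriangular.antipode_rTensor_mul (hR : IsQuasitriangular k A R) :
    LinearMap.rTensor A 𝒮 R * R = 1 := by
  let m : A ⊗[k] (A ⊗[k] A) →ₗ[k] A ⊗[k] A :=
    (LinearMap.mul' k A ∘ₗ LinearMap.rTensor A 𝒮).rTensor A ∘ₗ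
      (TensorProduct.assoc k A A A).symm.toLinearMap
  have hcomul (x : A ⊗[k] A) :
      m (TensorProduct.assoc k A A A ((Coalgebra.comul (R := k)).rTensor A x))
        = (1 : A) ⊗ₜ[k] (TensorProduct.lid k A ((Coalgebra.counit (R := k)).rTensor A x)) := by
    induction x using TensorProduct.induction_on with
    | zero => simp
    | tmul a b =>
      simp [m, HopfAlgebra.mul_antipode_rTensor_comul_apply, Algebra.algebraMap_eq_smul_one,
        TensorProduct.smul_tmul]
    | add a b ha hb => simp only [map_add, ha, hb, TensorProduct.tmul_add]
  have hR13 (x y : A ⊗[k] A) :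
      m (R13map k A x * ((1 : A) ⊗ₜ y)) = LinearMap.rTensor A 𝒮 x * y := by
    induction x using TensorProduct.induction_on with
    | zero => simp
    | tmul a b =>
      rw [R13map, TensorProduct.map_tmul, Algebra.TensorProduct.tmul_mul_tmul]
      induction y using TensorProduct.induction_on with
      | zero => simp
      | tmul c d => simp [m]
      | add c d hc hd => simp only [mul_add, TensorProduct.tmul_add, map_add, hc, hd]
    | add a b ha hb => simp only [map_add, add_mul, ha, hb]
  rw [← hR13, ← hR.2.1, hcomul, hR.counit_rTensor, Algebra.TensorProduct.one_def]

theorem IsTriangular.comm_mul (hR : IsTriangular k A R) :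
    TensorProduct.comm k A A R * R = 1 :=
  hR.1.1.mul_left_cancel (by rw [← mul_assoc, hR.2, one_mul, mul_one])

theorem IsTriangular.antipode_rTensor (hR : IsTriangular k A R) :
    LinearMap.rTensor A 𝒮 R = TensorProduct.comm k A A R :=
  hR.1.1.mul_right_cancel (by rw [hR.1.antipode_rTensor_mul, hR.comm_mul])

theorem IsTriangular.map_antipode (hR : IsTriangular k A R) :
    TensorProduct.map 𝒮 𝒮 R = R := by
  calc TensorProduct.map 𝒮 𝒮 R = LinearMap.lTensor A 𝒮 (LinearMap.rTensor A 𝒮 R) := by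
        rw [← LinearMap.comp_apply, LinearMap.lTensor_comp_rTensor]
    _ = LinearMap.lTensor A 𝒮 (TensorProduct.comm k A A R) := by rw [hR.antipode_rTensor]
    _ = TensorProduct.comm k A A (LinearMap.rTensor A 𝒮 R) :=
        TensorProduct.map_comm LinearMap.id 𝒮 R
    _ = R := by rw [hR.antipode_rTensor, TensorProduct.comm_comm]

theorem drinfeld_zero : drinfeld k A 0 = 0 := by simp [drinfeld]

theorem drinfeld_add (x y : A ⊗[k] A) :
    drinfeld k A (x + y) = drinfeld k A x + drinfeld k A y := by simp [drinfeld]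

theorem drinfeld_tmul (a b : A) : drinfeld k A (a ⊗ₜ b) = 𝒮 b * a := by simp [drinfeld]

theorem drinfeld_mul_tmul (z : A ⊗[k] A) (p q : A) :
    drinfeld k A (z * (p ⊗ₜ q)) = 𝒮 q * (drinfeld k A z * p) := by
  induction z using TensorProduct.induction_on with
  | zero => simp [drinfeld_zero]
  | tmul a b =>
    rw [Algebra.TensorProduct.tmul_mul_tmul, drinfeld_tmul, drinfeld_tmul,
      HopfAlgebra.antipode_mul_antidistrib, mul_assoc, mul_assoc]
  | add a b ha hb => rw [add_mul, drinfeld_add, drinfeld_add, add_mul, mul_add, ha, hb]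

theorem drinfeld_comm_comul_mul (y : A) (w : A ⊗[k] A) :
    drinfeld k A (TensorProduct.comm k A A (Coalgebra.comul (R := k) y) * w)
      = Coalgebra.counit (R := k) y • drinfeld k A w := by
  have hcomm (z : A ⊗[k] A) (a b : A) :
      drinfeld k A (TensorProduct.comm k A A z * (a ⊗ₜ b))
        = 𝒮 b * (LinearMap.mul' k A (LinearMap.rTensor A 𝒮 z) * a) := by
    induction z using TensorProduct.induction_on with
    | zero => simp [drinfeld_zero]
    | tmul c d =>
      rw [TensorProduct.comm_tmul, Algebra.TensorProduct.tmul_mul_tmul, drinfeld_tmul,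
        HopfAlgebra.antipode_mul_antidistrib]
      simp [mul_assoc]
    | add c d hc hd => simp only [map_add, add_mul, drinfeld_add, mul_add, hc, hd]
  induction w using TensorProduct.induction_on with
  | zero => simp [drinfeld_zero]
  | tmul a b =>
    rw [hcomm, HopfAlgebra.mul_antipode_rTensor_comul_apply, ← Algebra.smul_def, mul_smul_comm,
      drinfeld_tmul]
  | add a b ha hb => rw [mul_add, drinfeld_add, ha, hb, drinfeld_add, smul_add]

/-- The linear map `a ⊗ b ⊗ c ↦ S (b * S c) * (w * a)`. Its values on the two sides of
coassociativity compare `S² x * u` with `u * x`. -/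
noncomputable def antipodeContract (w : A) : A ⊗[k] (A ⊗[k] A) →ₗ[k] A :=
  LinearMap.mul' k A ∘ₗ TensorProduct.map (𝒮 ∘ₗ LinearMap.mul' k A ∘ₗ LinearMap.lTensor A 𝒮)
    (LinearMap.mulLeft k w) ∘ₗ (TensorProduct.comm k A (A ⊗[k] A)).toLinearMap

theorem antipodeContract_lTensor_comul (w : A) (z : A ⊗[k] A) :
    antipodeContract w (LinearMap.lTensor A (Coalgebra.comul (R := k)) z)
      = w * TensorProduct.rid k A (LinearMap.lTensor A (Coalgebra.counit (R := k)) z) := by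
  induction z using TensorProduct.induction_on with
  | zero => simp
  | tmul a y =>
    simp [antipodeContract, Algebra.algebraMap_eq_smul_one,
      HopfAlgebra.mul_antipode_lTensor_comul_apply]
  | add a b ha hb => simp only [map_add, ha, hb, mul_add]

theorem antipodeContract_drinfeld_assoc_tmul (w z : A ⊗[k] A) (c : A) :
    antipodeContract (drinfeld k A w) (TensorProduct.assoc k A A A (z ⊗ₜ c))
      = 𝒮 (𝒮 c) * drinfeld k A (w * z) := by
  induction z using TensorProduct.induction_on with
  | zero => simp [drinfeld_zero]
  | tmul a b =>
    rw [drinfeld_mul_tmul]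
    simp [antipodeContract, HopfAlgebra.antipode_mul_antidistrib, mul_assoc]
  | add a b ha hb =>
    simp only [map_add, TensorProduct.add_tmul, mul_add, drinfeld_add, ha, hb]

theorem IsQuasitriangular.antipodeContract_rTensor_comul (hR : IsQuasitriangular k A R)
    (z : A ⊗[k] A) :
    antipodeContract (drinfeld k A R)
        (TensorProduct.assoc k A A A (LinearMap.rTensor A (Coalgebra.comul (R := k)) z))
      = 𝒮 (𝒮 (TensorProduct.lid k A (LinearMap.rTensor A (Coalgebra.counit (R := k)) z)))
        * drinfeld k A R := by
  induction z using TensorProduct.induction_on with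
  | zero => simp
  | tmul y c =>
    rw [LinearMap.rTensor_tmul, antipodeContract_drinfeld_assoc_tmul, ← hR.2.2.2,
      drinfeld_comm_comul_mul]
    simp
  | add a b ha hb => simp only [map_add, ha, hb, add_mul]

theorem IsQuasitriangular.antipode_antipode_mul_drinfeld (hR : IsQuasitriangular k A R) (x : A) :
    𝒮 (𝒮 x) * drinfeld k A R = drinfeld k A R * x := by
  have h := hR.antipodeContract_rTensor_comul (Coalgebra.comul (R := k) x)
  rw [Coalgebra.coassoc_apply, antipodeContract_lTensor_comul] at h
  simpa using h.symm

theorem IsTriangular.sandwich_drinfeld (hR : IsTriangular k A R) :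
    sandwich k (drinfeld k A R) R = 1 := by
  have hmap (z : A ⊗[k] A) : sandwich k (drinfeld k A R) (TensorProduct.map 𝒮 𝒮 z)
      = drinfeld k A (R * LinearMap.rTensor A 𝒮 z) := by
    induction z using TensorProduct.induction_on with
    | zero => simp [drinfeld_zero]
    | tmul a b => simp [drinfeld_mul_tmul]
    | add a b ha hb => simp only [map_add, mul_add, drinfeld_add, ha, hb]
  have hRmap := hmap R
  rw [hR.map_antipode, hR.antipode_rTensor, hR.2] at hRmap
  rw [hRmap, Algebra.TensorProduct.one_def, drinfeld_tmul, HopfAlgebra.antipode_one, mul_one]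

theorem IsTriangular.commute_drinfeld_tmul_drinfeld (hR : IsTriangular k A R) :
    Commute (drinfeld k A R ⊗ₜ drinfeld k A R) R := by
  set u := drinfeld k A R with hu
  have h (z : A ⊗[k] A) : TensorProduct.map 𝒮 𝒮 (TensorProduct.map 𝒮 𝒮 z) * (u ⊗ₜ u)
      = (u ⊗ₜ u) * z := by
    induction z using TensorProduct.induction_on with
    | zero => simp
    | tmul a b => simp [hu, hR.1.antipode_antipode_mul_drinfeld]
    | add a b ha hb => simp only [map_add, add_mul, mul_add, ha, hb]
  have hRu := h R
  rw [hR.map_antipode, hR.map_antipode] at hRu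
  exact hRu.symm

end Hopf

section YangBaxter

variable {k A C : Type*} [CommRing k] [Ring A] [HopfAlgebra k A] [Ring C] [Algebra k C]
  {R : A ⊗[k] A} {f g h : A →ₐ[k] C} (hR : IsQuasitriangular k A R)
  (hfg : ∀ x y, Commute (f x) (g y)) (hgh : ∀ x y, Commute (g x) (h y))
  (hfh : ∀ x y, Commute (f x) (h y))
include hR hgh hfh

theorem IsQuasitriangular.pairMap_lift_comp_comul :
    pairMap ((Algebra.TensorProduct.lift f g hfg).comp (Bialgebra.comulAlgHom k A)) h R
      = pairMap f h R * pairMap g h R := by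
  let Φ : A ⊗[k] (A ⊗[k] A) →ₐ[k] C :=
    Algebra.TensorProduct.lift f (Algebra.TensorProduct.lift g h hgh) fun x w ↦ by
      rw [lift_eq_pairMap]
      exact semiconjBy_pairMap (hfg x) (hfh x) w
  have hassoc (z : A ⊗[k] A) (b : A) :
      Φ (TensorProduct.assoc k A A A (z ⊗ₜ b)) = Algebra.TensorProduct.lift f g hfg z * h b := by
    induction z using TensorProduct.induction_on with
    | zero => simp
    | tmul a c => simp [Φ, mul_assoc]
    | add a c ha hc => simp only [map_add, TensorProduct.add_tmul, add_mul, ha, hc]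
  have hcomul (w : A ⊗[k] A) :
      Φ (TensorProduct.assoc k A A A (LinearMap.rTensor A (Coalgebra.comul (R := k)) w))
        = pairMap ((Algebra.TensorProduct.lift f g hfg).comp (Bialgebra.comulAlgHom k A)) h w := by
    induction w using TensorProduct.induction_on with
    | zero => simp
    | tmul a b => simp [hassoc]
    | add a c ha hc => simp only [map_add, ha, hc]
  have hR13 (w : A ⊗[k] A) : Φ (R13map k A w) = pairMap f h w := by
    induction w using TensorProduct.induction_on with
    | zero => simp
    | tmul a b => simp [Φ, R13map]
    | add a c ha hc => simp only [map_add, ha, hc]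
  rw [← hcomul, hR.2.1, map_mul, hR13, Algebra.TensorProduct.lift_tmul, map_one, one_mul,
    lift_eq_pairMap]

include hfg in
theorem IsQuasitriangular.yangBaxter :
    pairMap f g R * pairMap f h R * pairMap g h R
      = pairMap g h R * pairMap f h R * pairMap f g R := by
  have hgf (x y) : Commute (g x) (f y) := (hfg y x).symm
  rw [mul_assoc, ← hR.pairMap_lift_comp_comul hfg hgh hfh,
    ← hR.pairMap_lift_comp_comul hgf hfh hgh]
  refine semiconjBy_pairMap (fun x ↦ ?_) (fun x ↦ ?_) R
  · simp only [AlgHom.comp_apply, Bialgebra.comulAlgHom_apply, lift_eq_pairMap]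
    rw [SemiconjBy, ← pairMap_mul hfg, ← hR.2.2.2, pairMap_mul hfg, pairMap_comm hfg]
  · exact (semiconjBy_pairMap (fun a ↦ (hfh a x).symm) (fun a ↦ (hgh a x).symm) R).symm

end YangBaxter

section Trace

theorem isCoxeterFamily_pairMap_factorHom {k A X : Type*} [CommRing k] [Ring A] [HopfAlgebra k A]
    {R : A ⊗[k] A} (hR : IsTriangular k A R) [Ring X] [Algebra k X] (ρ : A →ₐ[k] X) {P : X ⊗[k] X}
    (hP : IsFlip P) (N : ℕ) :
    IsCoxeterFamily fun i : Fin N ↦ pairMap (factorHom k X i.succ) (factorHom k X i.castSucc)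
      (P * Algebra.TensorProduct.map ρ ρ R) where
  sq i := by
    have hr : TensorProduct.comm k X X (Algebra.TensorProduct.map ρ ρ R)
        * Algebra.TensorProduct.map ρ ρ R = 1 := by
      have hcomm : TensorProduct.comm k X X (Algebra.TensorProduct.map ρ ρ R)
          = Algebra.TensorProduct.map ρ ρ (TensorProduct.comm k A A R) :=
        (TensorProduct.map_comm ρ.toLinearMap ρ.toLinearMap R).symm
      rw [hcomm, ← map_mul, hR.comm_mul, map_one]
    rw [← pairMap_mul (commute_factorHom Fin.castSucc_lt_succ.ne'), hP.mul_mul_self hr, pairMap_one]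
  comm i j hij := by
    have hdisj {p q : Fin (N + 1)} (hp : (p : ℕ) < q) (x y : X) :
        Commute (factorHom k X p x) (factorHom k X q y) :=
      commute_factorHom (Fin.ne_of_lt hp) x y
    refine commute_pairMap (hdisj ?_) (hdisj ?_) (hdisj ?_) (hdisj ?_) _ _ <;>
      simp only [Fin.val_succ, Fin.val_castSucc] <;> omega
  braid i j hij := by
    have h : i.succ = j.castSucc := Fin.ext hij
    have hj := commute_factorHom (k := k) (X := X) (Fin.castSucc_lt_succ (i := j)).ne'
    have hi := commute_factorHom (k := k) (X := X) (Fin.castSucc_lt_succ (i := i)).ne'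
    have hij' := commute_factorHom (k := k) (X := X)
      ((h ▸ Fin.castSucc_lt_succ : i.castSucc < j.castSucc).trans Fin.castSucc_lt_succ).ne'
    rw [h] at hi ⊢
    refine (hP.braid hj hi hij' ?_).symm
    simp only [pairMap_map]
    exact hR.1.yangBaxter (fun x y ↦ hj _ _) (fun x y ↦ hi _ _) (fun x y ↦ hij' _ _)

theorem exists_intCast_eq_trace_drinfeld {K A m : Type*} [Field K] [Ring A] [HopfAlgebra K A]
    {R : A ⊗[K] A} (hR : IsTriangular K A R) [Fintype m] [DecidableEq m]
    (ρ : A →ₐ[K] Matrix m m K) : ∃ n : ℤ, (ρ (drinfeld K A R)).trace = n := by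
  by_contra! hu
  let X := Matrix m m K
  let c : X ⊗[K] X := matrixFlip K m * Algebra.TensorProduct.map ρ ρ R
  have huc : Commute (ρ (drinfeld K A R) ⊗ₜ ρ (drinfeld K A R)) c := by
    refine Commute.mul_right ((isFlip_matrixFlip K m).mul_tmul _ _).symm ?_
    simpa using hR.commute_drinfeld_tmul_drinfeld.map (Algebra.TensorProduct.map ρ ρ)
  have hpartial : TensorProduct.rid K X (LinearMap.lTensor X
      (Matrix.traceLinearMap m K K ∘ₗ LinearMap.mulLeft K (ρ (drinfeld K A R))) c) = 1 := by
    rw [partialTrace_matrixFlip_mul, sandwich_map, hR.sandwich_drinfeld, map_one]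
  obtain ⟨N, hN⟩ :=
    (Nat.eventually_pow_lt_factorial_sub (Module.finrank K X) 0).exists_forall_of_atTop
  exact (hN (N + 2) (Nat.le_add_right N 2)).not_ge (factorial_le_finrank_pow
    (τ := Matrix.traceLinearMap m K K) Matrix.trace_mul_comm huc hpartial hu
    (isCoxeterFamily_pairMap_factorHom hR ρ (isFlip_matrixFlip K m) (N + 1)))

end Trace

theorem trace_drinfeld_isInt_general {K A : Type*} [Field K] [Ring A] [HopfAlgebra K A]
    {R : A ⊗[K] A} (hR : IsTriangular K A R) (V : Type*) [AddCommGroup V] [Module K V]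
    [Module A V] [IsScalarTower K A V] [FiniteDimensional K V] :
    ∃ n : ℤ, LinearMap.trace K V (Algebra.lsmul K K V (drinfeld K A R)) = n := by
  let b := Module.finBasis K V
  obtain ⟨n, hn⟩ := exists_intCast_eq_trace_drinfeld hR
    ((LinearMap.toMatrixAlgEquiv b).toAlgHom.comp (Algebra.lsmul K K V))
  exact ⟨n, (LinearMap.trace_eq_matrix_trace K b _).trans hn⟩

/-- Corollary 7.4.6: for a triangular Hopf algebra `(A,R)` over `ℂ`
with Drinfeld element `u`, the trace of `u` on any finite-dimensional `A`-module is an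
integer. -/
theorem trace_drinfeld_isInt
    (A : Type*) [Ring A] [HopfAlgebra ℂ A]
    (R : A ⊗[ℂ] A) (hR : IsTriangular ℂ A R)
    (V : Type*) [AddCommGroup V] [Module ℂ V] [Module A V] [IsScalarTower ℂ A V]
    [FiniteDimensional ℂ V] :
    ∃ n : ℤ, LinearMap.trace ℂ V (smulLinearMap A (drinfeld ℂ A R) V) = (n : ℂ) :=
  trace_drinfeld_isInt_general hR V
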